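/- Let Q = (Q_0, Q_1) be a finite quiver, and let 𝒬 = (Q, Q_2) be a 2-quiver with a 2-arrow V : Γ(1) ⟹ Γ(2) such that Γ(1) is a connected full subquiver with a unique source p. Let 𝒬_p be the 2-quiver obtained from 𝒬 by replacing V with the 2-arrow V_p : {p} ⟹ Γ(2). Then a subset β ⊆ Q_0 is strong successor closed in 𝒬 if and only if it is strong successor closed in 𝒬_p. -/

import Mathlib

/-- A set of vertices `β` is successor closed: arrows starting in `β` end in `β`. -/
def SuccClosed {V : Type*} (E : V → V → Prop) (β : Set V) : Prop :=
  ∀ a b, E a b → a ∈ β → b ∈ β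

/-- `β` is strong successor closed in the 2-quiver `(E, Q2)`: it is successor closed and
for every 2-arrow `(Γ1, Γ2) ∈ Q2` with `Γ1 ⊆ β` we have `Γ2 ∩ β ≠ ∅`. -/
def StrongSuccClosed {V : Type*} (E : V → V → Prop) (Q2 : Set (Set V × Set V))
    (β : Set V) : Prop :=
  SuccClosed E β ∧ ∀ γ ∈ Q2, γ.1 ⊆ β → (γ.2 ∩ β).Nonempty

/-!
In a finite acyclic quiver, going backwards along arrows inside `Γ1` terminates, necessarily at the
unique source `p`; so every vertex of `Γ1` is reachable from `p`. A successor closed set therefore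
contains `p` exactly when it contains `Γ1`, and the conditions imposed by `Γ1 ⟹ Γ2` and `{p} ⟹ Γ2`
coincide.
-/

section Relation

variable {α : Type*} {r : α → α → Prop} {s : Set α}

theorem wellFoundedOn_of_finite_of_acyclic (hs : s.Finite)
    (hr : ∀ a, ¬ Relation.TransGen r a a) : s.WellFoundedOn r := by
  have : IsStrictOrder α (Relation.TransGen r) := { irrefl := hr }
  exact hs.wellFoundedOn.mono' fun _ _ _ _ => Relation.TransGen.single

theorem reflTransGen_of_unique_source (hwf : s.WellFoundedOn r) {p : α}
    (huniq : ∀ q ∈ s, (∀ a ∈ s, ¬ r a q) → q = p) {q : α} (hq : q ∈ s) :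
    Relation.ReflTransGen r p q := by
  refine hwf.induction hq fun q hq ih => ?_
  by_cases hsource : ∀ a ∈ s, ¬ r a q
  · rw [huniq q hq hsource]
  · push Not at hsource
    obtain ⟨a, ha, haq⟩ := hsource
    exact (ih a ha haq).tail haq

end Relation

section TwoQuiver

variable {V : Type*} {E : V → V → Prop} {β : Set V}

theorem SuccClosed.mem_of_reflTransGen (hβ : SuccClosed E β) {a b : V}
    (hab : Relation.ReflTransGen E a b) (ha : a ∈ β) : b ∈ β := by
  induction hab with
  | refl => exact ha
  | tail _ hbc ih => exact hβ _ _ hbc ih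

theorem SuccClosed.subset_iff_mem_of_reachable (hβ : SuccClosed E β) {Γ : Set V} {p : V}
    (hp : p ∈ Γ) (hreach : ∀ q ∈ Γ, Relation.ReflTransGen E p q) : Γ ⊆ β ↔ p ∈ β :=
  ⟨fun hΓ => hΓ hp, fun hpβ q hq => hβ.mem_of_reflTransGen (hreach q hq) hpβ⟩

theorem strongSuccClosed_iff_replace_source {Q2 : Set (Set V × Set V)} {Γ Γ' Δ : Set V}
    (hmem : (Γ, Δ) ∈ Q2) (hΓ : SuccClosed E β → (Γ ⊆ β ↔ Γ' ⊆ β)) :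
    StrongSuccClosed E Q2 β ↔
      StrongSuccClosed E (insert (Γ', Δ) (Q2 \ {(Γ, Δ)})) β := by
  refine and_congr_right fun hβ => ?_
  calc
    (∀ γ ∈ Q2, γ.1 ⊆ β → (γ.2 ∩ β).Nonempty)
      ↔ ∀ γ ∈ insert (Γ, Δ) (Q2 \ {(Γ, Δ)}), γ.1 ⊆ β → (γ.2 ∩ β).Nonempty := by
        rw [Set.insert_sdiff_self_of_mem hmem]
    _ ↔ ∀ γ ∈ insert (Γ', Δ) (Q2 \ {(Γ, Δ)}), γ.1 ⊆ β → (γ.2 ∩ β).Nonempty := by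
        simp only [Set.forall_mem_insert, hΓ hβ]

theorem stmt_11_general {Q2 : Set (Set V × Set V)} {Γ1 Γ2 : Set V} (hmem : (Γ1, Γ2) ∈ Q2)
    {p : V} (hp : p ∈ Γ1) (hreach : ∀ q ∈ Γ1, Relation.ReflTransGen E p q) :
    StrongSuccClosed E Q2 β ↔
      StrongSuccClosed E (insert (({p} : Set V), Γ2) (Q2 \ {(Γ1, Γ2)})) β :=
  strongSuccClosed_iff_replace_source hmem fun hβ =>
    (hβ.subset_iff_mem_of_reachable hp hreach).trans Set.singleton_subset_iff.symm

end TwoQuiver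

/-- let `𝒬 = (E, Q2)` be a 2-quiver on a finite acyclic quiver with a
2-arrow `(Γ1, Γ2) ∈ Q2` whose source subquiver `Γ1` is connected with a unique source `p`.
Replacing this 2-arrow by `({p}, Γ2)` does not change the strong successor closed subsets. -/
theorem stmt_11 {V : Type*} [Finite V] (E : V → V → Prop)
    (hacyc : ∀ a, ¬ Relation.TransGen E a a)
    (Q2 : Set (Set V × Set V)) (Γ1 Γ2 : Set V) (hmem : (Γ1, Γ2) ∈ Q2)
    (hconn : ∀ a ∈ Γ1, ∀ b ∈ Γ1,
      Relation.ReflTransGen (fun x y => x ∈ Γ1 ∧ y ∈ Γ1 ∧ (E x y ∨ E y x)) a b)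
    (p : V) (hp : p ∈ Γ1)
    (hsource : ∀ a ∈ Γ1, ¬ E a p)
    (huniq : ∀ q ∈ Γ1, (∀ a ∈ Γ1, ¬ E a q) → q = p)
    (β : Set V) :
    StrongSuccClosed E Q2 β ↔
      StrongSuccClosed E (insert (({p} : Set V), Γ2) (Q2 \ {(Γ1, Γ2)})) β := by
  have hwf : Γ1.WellFoundedOn E := wellFoundedOn_of_finite_of_acyclic Γ1.toFinite hacyc
  exact stmt_11_general hmem hp fun _ => reflTransGen_of_unique_source hwf huniq
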